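/- arXiv:2502.11867 — 2 statements merged into one kernel-verified Lean document; each statement's English description precedes it below -/
import Mathlib

section
/- The function f(x, y) = x · exp(y/x − 1) is convex on the convex set {(x, y) ∈ ℝ² : x > 0}. -/
/-!
On the half-plane `x > 0`, the function `x * exp (y / x - 1)` is the pointwise maximum over `t` of
the linear functions `exp t * (y - t * x)`, attained at `t = y / x - 1`; hence it is convex.
The lower bound `exp_mul_sub_le` is the tangent-line inequality for `exp` at `t`, multiplied by `x`.
-/

theorem exp_mul_sub_le (t : ℝ) {x : ℝ} (hx : 0 < x) (y : ℝ) :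
    Real.exp t * (y - t * x) ≤ x * Real.exp (y / x - 1) := by
  have h := Real.add_one_le_exp (y / x - 1 - t)
  calc Real.exp t * (y - t * x) = x * (Real.exp t * (y / x - 1 - t + 1)) := by
        field_simp
        ring
    _ ≤ x * (Real.exp t * Real.exp (y / x - 1 - t)) := by gcongr
    _ = x * Real.exp (y / x - 1) := by
        rw [← Real.exp_add, add_sub_cancel]

/-- The function `f (x, y) = x * exp (y / x - 1)` is convex on the open
half-plane `{(x, y) : x > 0}`. -/
theorem convexOn_mul_exp_div_sub_one :
    ConvexOn ℝ {p : ℝ × ℝ | 0 < p.1}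
      (fun p : ℝ × ℝ => p.1 * Real.exp (p.2 / p.1 - 1)) := by
  have hconv : Convex ℝ {p : ℝ × ℝ | 0 < p.1} :=
    convex_halfSpace_gt (LinearMap.fst ℝ ℝ ℝ).isLinear 0
  refine ⟨hconv, ?_⟩
  rintro ⟨x, y⟩ hx ⟨u, v⟩ hu a b ha hb hab
  have hX : 0 < a * x + b * u := hconv hx hu ha hb hab
  simp only [Prod.smul_mk, Prod.mk_add_mk, smul_eq_mul]
  -- The supporting linear function at the convex combination has this slope parameter.
  set t := (a * y + b * v) / (a * x + b * u) - 1 with ht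
  have heq : t * (a * x + b * u) = a * y + b * v - (a * x + b * u) := by
    rw [ht]
    field_simp
  calc (a * x + b * u) * Real.exp t
      = a * (Real.exp t * (y - t * x)) + b * (Real.exp t * (v - t * u)) := by
        linear_combination Real.exp t * heq
    _ ≤ a * (x * Real.exp (y / x - 1)) + b * (u * Real.exp (v / u - 1)) := by
        exact add_le_add (mul_le_mul_of_nonneg_left (exp_mul_sub_le t hx y) ha)
          (mul_le_mul_of_nonneg_left (exp_mul_sub_le t hu v) hb)
end

section
/- Let p̄ ∈ ℝ^K be a probability vector with p̄_k > 0 for all k and Σ_k p̄_k = 1, let ρ ≥ 0, c ∈ ℝ^K, μ ∈ ℝ, and ν > 0. Then for every probability vector p ∈ ℝ^K (p_k ≥ 0, Σ_k p_k = 1) satisfying the Kullback–Leibler constraint Σ_{k=1}^K p_k · log(p_k/p̄_k) ≤ ρ (with the convention 0·log 0 = 0), one has Σ_{k=1}^K p_k c_k ≤ μ + ρν + ν·Σ_{k=1}^K p̄_k · exp((c_k − μ)/ν − 1). -/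
/-!
The function `q * exp (s - 1)` is the convex conjugate of `p ↦ p * log (p / q)` on `p ≥ 0`, so the
Fenchel–Young inequality (`fenchel_young_kl`) bounds each `p k * s` with `s = (c k - μ) / ν`.
Summing over `k`, using `∑ p k = 1` and the KL constraint, and scaling by `ν > 0` gives the bound.
-/

open Finset

/-- Fenchel–Young inequality for the KL integrand. For `p > 0` it is `t + 1 ≤ exp t` at
`t = s - 1 - log (p / q)`, multiplied by `p`. -/
lemma fenchel_young_kl {p q : ℝ} (hp : 0 ≤ p) (hq : 0 < q) (s : ℝ) :
    p * s ≤ p * Real.log (p / q) + q * Real.exp (s - 1) := by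
  rcases hp.eq_or_lt with rfl | hp
  · simp only [zero_mul, zero_add]
    positivity
  · have h := mul_le_mul_of_nonneg_left
      (Real.add_one_le_exp (s - 1 - Real.log (p / q))) hp.le
    rw [Real.exp_sub, Real.exp_log (div_pos hp hq)] at h
    have e : p * (Real.exp (s - 1) / (p / q)) = q * Real.exp (s - 1) := by
      field_simp
    rw [e] at h
    linarith

/-- Weak duality for the KL ambiguity set: any probability vector `p` with
`KL(p, p̄) ≤ ρ` satisfies
`∑ k, p k * c k ≤ μ + ρν + ν ∑ k, p̄ k * exp ((c k - μ) / ν - 1)`.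
(Note `Real.log 0 = 0`, which encodes the convention `0 * log 0 = 0`.) -/
theorem kl_weak_duality
    (K : ℕ) (pbar : Fin K → ℝ) (hpbar : ∀ k, 0 < pbar k) (hpbarsum : ∑ k, pbar k = 1)
    (ρ : ℝ) (hρ : 0 ≤ ρ) (c : Fin K → ℝ) (μ ν : ℝ) (hν : 0 < ν)
    (p : Fin K → ℝ) (hp : ∀ k, 0 ≤ p k) (hpsum : ∑ k, p k = 1)
    (hKL : ∑ k, p k * Real.log (p k / pbar k) ≤ ρ) :
    ∑ k, p k * c k ≤ μ + ρ * ν + ν * ∑ k, pbar k * Real.exp ((c k - μ) / ν - 1) := by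
  have h := Finset.sum_le_sum fun k (_ : k ∈ Finset.univ) =>
    fenchel_young_kl (hp k) (hpbar k) ((c k - μ) / ν)
  rw [Finset.sum_add_distrib] at h
  have e : ∑ k, p k * c k = μ + ν * ∑ k, p k * ((c k - μ) / ν) := by
    have hk : ∀ k, ν * (p k * ((c k - μ) / ν)) = p k * c k - p k * μ := fun k => by
      field_simp
    simp only [Finset.mul_sum, hk, Finset.sum_sub_distrib]
    rw [← Finset.sum_mul, hpsum]
    ring
  rw [e]
  have h2 := mul_le_mul_of_nonneg_left (h.trans (add_le_add_left hKL _)) hν.le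
  linarith
end
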